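/- arXiv:2508.00392 — 5 statements merged into one kernel-verified Lean document; each statement's English description precedes it below -/
import Mathlib

section
/- Let Ω ⊆ ℝ^d be a convex set whose diameter is at most D (i.e., ‖x − y‖ ≤ D for all x, y ∈ Ω), with D > 0 and G > 0. Let f : ℝ^d → ℝ be differentiable on Ω with ‖∇f(w)‖ ≤ G for all w ∈ Ω, and suppose that for some α > 0 the function w ↦ exp(−α f(w)) is concave on Ω. Then, setting β = (1/2)·min{1/(4GD), α}, for all x, y ∈ Ω one has f(y) ≥ f(x) + ⟨∇f(x), y − x⟩ + (β/2)·⟨∇f(x), y − x⟩². -/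
open scoped RealInnerProductSpace

theorem exp_aux (z : ℝ) (hz : |z| ≤ 1/4) : 1 - z ≤ Real.exp (-(z + z^2/4)) := by
  have hz' := abs_le.1 hz
  set u := z + z^2/4 with hu
  have h1 : |u| ≤ 17/64 := by
    rw [abs_le]; constructor <;> nlinarith
  have hb := Real.exp_bound (x := -u) (by rw [abs_neg]; linarith) (n := 3) (by norm_num)
  have h2 := (abs_le.1 hb).1
  norm_num [Finset.sum_range_succ, Nat.factorial] at h2
  have h3 : |u|^3 ≤ 17/64 * u^2 := by
    have : |u|^3 = |u| * u^2 := by rw [← sq_abs u]; ring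
    rw [this]; gcongr
  have h4 : (15/16)^2 * z^2 ≤ u^2 := by
    have : u^2 = z^2 * (1+z/4)^2 := by rw [hu]; ring
    rw [this]
    have : (15/16:ℝ)^2 ≤ (1+z/4)^2 := by gcongr; linarith
    nlinarith [sq_nonneg z]
  nlinarith [sq_nonneg z]

/-- Lemma 3 of Hazan et al.: an `α`-exp-concave function with gradients bounded by `G`
over a convex domain of diameter `D` satisfies a quadratic lower bound with
`β = (1/2) min {1/(4GD), α}`. -/
theorem exp_concave_quadratic_lower_bound
    {d : ℕ} (Ω : Set (EuclideanSpace ℝ (Fin d))) (hΩ : Convex ℝ Ω)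
    (D G α : ℝ) (hD : 0 < D) (hG : 0 < G) (hα : 0 < α)
    (hdiam : ∀ x ∈ Ω, ∀ y ∈ Ω, ‖x - y‖ ≤ D)
    (f : EuclideanSpace ℝ (Fin d) → ℝ)
    (g : EuclideanSpace ℝ (Fin d) → EuclideanSpace ℝ (Fin d))
    (hgrad : ∀ w ∈ Ω, HasGradientAt f (g w) w)
    (hgbound : ∀ w ∈ Ω, ‖g w‖ ≤ G)
    (hconc : ConcaveOn ℝ Ω (fun w => Real.exp (-α * f w))) :
    ∀ x ∈ Ω, ∀ y ∈ Ω,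
      f y ≥ f x + ⟪g x, y - x⟫
        + (1 / 2 * min (1 / (4 * G * D)) α) / 2 * ⟪g x, y - x⟫ ^ 2 := by
  intro x hx y hy
  have hline : HasDerivAt (fun t : ℝ => AffineMap.lineMap x y t) (y - x) (0:ℝ) :=
    AffineMap.hasDerivAt_lineMap
  have hf : HasDerivAt (fun t : ℝ => f (AffineMap.lineMap x y t)) ⟪g x, y - x⟫ (0:ℝ) := by
    have h0 := (hgrad x hx).hasFDerivAt
    have h1 : AffineMap.lineMap x y (0:ℝ) = x := by simp
    rw [← h1] at h0
    have := h0.comp_hasDerivAt (0:ℝ) hline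
    simpa [Function.comp_def] using this
  have hs : |⟪g x, y - x⟫| ≤ G * D :=
    (abs_real_inner_le_norm _ _).trans
      (mul_le_mul (hgbound x hx) (hdiam y hy x hx) (norm_nonneg _) hG.le)
  generalize ⟪g x, y - x⟫ = s at *
  have he := (hf.const_mul (-α)).exp
  have hc := hconc.comp_affineMap (AffineMap.lineMap x y : ℝ →ᵃ[ℝ] _)
  have hsl := hc.slope_le_of_hasDerivAt (x := 0) (y := 1) (by simpa using hx) (by simpa using hy)
    one_pos he
  simp [slope_def_field] at hsl
  set γ := min (1 / (4 * G * D)) α with hγ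
  have hγ0 : 0 < γ := lt_min (by positivity) hα
  have hγα : γ ≤ α := min_le_right _ _
  have hγ1 : γ * (G * D) ≤ 1/4 := by
    have : γ ≤ 1 / (4 * G * D) := min_le_left _ _
    calc γ * (G * D) ≤ 1 / (4 * G * D) * (G * D) := by gcongr
      _ = 1/4 := by field_simp
  have hz : |γ * s| ≤ 1/4 := by
    rw [abs_mul, abs_of_pos hγ0]
    exact (mul_le_mul_of_nonneg_left hs hγ0.le).trans hγ1
  have h1 : Real.exp (-α * (f y - f x)) ≤ 1 - α * s := by
    have : -α * (f y - f x) = -(α * f y) - -(α * f x) := by ring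
    rw [this, Real.exp_sub, div_le_iff₀ (Real.exp_pos _)]
    linarith
  have h2 : Real.exp (-γ * (f y - f x)) ≤ 1 - γ * s := by
    have hpos := (Real.exp_pos _).trans_le h1
    have e1 : Real.exp (-γ * (f y - f x)) = Real.exp (-α * (f y - f x)) ^ (γ/α) := by
      rw [← Real.exp_mul]; congr 1; field_simp
    have e2 := rpow_one_add_le_one_add_mul_self (s := -(α * s)) (by linarith)
      (p := γ/α) (by positivity) ((div_le_one hα).2 hγα)
    have e3 : 1 + γ/α * (-(α*s)) = 1 - γ * s := by field_simp; ring
    rw [e1, ← e3]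
    refine le_trans (Real.rpow_le_rpow (Real.exp_pos _).le h1 (by positivity)) ?_
    simpa [sub_eq_add_neg] using e2
  have h3 := Real.exp_le_exp.1 (h2.trans (exp_aux _ hz))
  have h4 : γ * (s + γ * s^2/4) ≤ γ * (f y - f x) := by linarith
  have h5 := le_of_mul_le_mul_left h4 hγ0
  linarith
end

section
/- For every pair of natural numbers p, q with 1 ≤ p ≤ q, the integer interval [p, q] can be partitioned into a sequence of pairwise disjoint, consecutive geometric covering intervals I_{−m}, …, I_{−1}, I_0, I_1, …, I_n (each belonging to 𝓘, listed in order, whose union is exactly {p, p+1, …, q}) such that |I_{−i}| / |I_{−i+1}| ≤ 1/2 for all i ≥ 1, and |I_i| / |I_{i−1}| ≤ 1/2 for all i ≥ 2, where |I| denotes the number of integers in the interval I. -/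
/-- A geometric covering (GC) interval is an integer interval
`[i·2^k, (i+1)·2^k − 1]` with `k ≥ 0` and `i ≥ 1`. -/
def IsGCInterval (I : Finset ℕ) : Prop :=
  ∃ k i : ℕ, 1 ≤ i ∧ I = Finset.Icc (i * 2 ^ k) ((i + 1) * 2 ^ k - 1)

/-- The half-open interval `[a, b)` is a nonempty GC interval. -/
def GCStep (a b : ℕ) : Prop := a < b ∧ IsGCInterval (Finset.Ico a b)

theorem gcStep_of_dvd {c k : ℕ} (hc : 1 ≤ c) (h : 2 ^ k ∣ c) : GCStep c (c + 2 ^ k) := by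
  obtain ⟨i, rfl⟩ := h
  have hk : 0 < 2 ^ k := by positivity
  refine ⟨by omega, k, i, ?_, ?_⟩
  · rcases Nat.eq_zero_or_pos i with rfl | h
    · simp at hc
    · exact h
  · ext x
    have h1 : (i + 1) * 2 ^ k = 2 ^ k * i + 2 ^ k := by ring
    have h2 : i * 2 ^ k = 2 ^ k * i := by ring
    rw [Finset.mem_Ico, Finset.mem_Icc, h1, h2]
    omega

theorem right_part (k : ℕ) : ∀ c Q : ℕ, 1 ≤ c → 2 ^ k ∣ c → c ≤ Q → Q < c + 2 ^ k →
    ∃ (n : ℕ) (f : ℕ → ℕ), f 0 = c ∧ f n = Q ∧ (∀ i, i < n → GCStep (f i) (f (i + 1))) ∧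
      (∀ i, i + 1 < n → 2 * (f (i + 2) - f (i + 1)) ≤ f (i + 1) - f i) ∧
      (0 < n → 2 * (f 1 - f 0) ≤ 2 ^ k) := by
  induction k with
  | zero =>
    intro c Q _ _ h1 h2
    exact ⟨0, fun _ => c, rfl, by simp at h2 ⊢; omega, by simp, by simp, by simp⟩
  | succ k ih =>
    intro c Q hc hd h1 h2
    have hd' : 2 ^ k ∣ c := (pow_dvd_pow 2 (Nat.le_succ k)).trans hd
    have hp : 2 ^ (k + 1) = 2 * 2 ^ k := by ring
    by_cases hQ : Q < c + 2 ^ k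
    · obtain ⟨n, f, a1, a2, a3, a4, a5⟩ := ih c Q hc hd' h1 hQ
      exact ⟨n, f, a1, a2, a3, a4, fun h => by have := a5 h; omega⟩
    · obtain ⟨n, f, a1, a2, a3, a4, a5⟩ := ih (c + 2 ^ k) Q (by omega)
        (Nat.dvd_add hd' dvd_rfl) (by omega) (by omega)
      refine ⟨n + 1, fun i => Nat.casesOn i c f, rfl, a2, ?_, ?_, ?_⟩
      · rintro (_ | i) hi
        · simpa [a1] using gcStep_of_dvd hc hd'
        · exact a3 i (by omega)
      · rintro (_ | i) hi
        · have := a5 (by omega)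
          change 2 * (f 1 - f 0) ≤ f 0 - c
          omega
        · exact a4 i (by omega)
      · intro _
        change 2 * (f 0 - c) ≤ 2 ^ (k + 1)
        omega

theorem left_part (k : ℕ) : ∀ c p : ℕ, 1 ≤ p → 2 ^ k ∣ c → p ≤ c → c < p + 2 ^ k →
    ∃ (n : ℕ) (f : ℕ → ℕ), f 0 = c ∧ f n = p ∧ (∀ i, i < n → GCStep (f (i + 1)) (f i)) ∧
      (∀ i, i + 1 < n → 2 * (f (i + 1) - f (i + 2)) ≤ f i - f (i + 1)) ∧
      (0 < n → 2 * (f 0 - f 1) ≤ 2 ^ k) := by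
  induction k with
  | zero =>
    intro c Q _ _ h1 h2
    exact ⟨0, fun _ => c, rfl, by simp at h2 ⊢; omega, by simp, by simp, by simp⟩
  | succ k ih =>
    intro c p hp1 hd h1 h2
    have hd' : 2 ^ k ∣ c := (pow_dvd_pow 2 (Nat.le_succ k)).trans hd
    have hp : 2 ^ (k + 1) = 2 * 2 ^ k := by ring
    by_cases hQ : c < p + 2 ^ k
    · obtain ⟨n, f, a1, a2, a3, a4, a5⟩ := ih c p hp1 hd' h1 hQ
      exact ⟨n, f, a1, a2, a3, a4, fun h => by have := a5 h; omega⟩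
    · have hd2 : 2 ^ k ∣ c - 2 ^ k := Nat.dvd_sub hd' dvd_rfl
      obtain ⟨n, f, a1, a2, a3, a4, a5⟩ := ih (c - 2 ^ k) p hp1 hd2 (by omega) (by omega)
      refine ⟨n + 1, fun i => Nat.casesOn i c f, rfl, a2, ?_, ?_, ?_⟩
      · rintro (_ | i) hi
        · have := gcStep_of_dvd (c := c - 2 ^ k) (by omega) hd2
          rw [Nat.sub_add_cancel (by omega)] at this
          simpa [a1] using this
        · exact a3 i (by omega)
      · rintro (_ | i) hi
        · have := a5 (by omega)
          change 2 * (f 0 - f 1) ≤ c - f 0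
          omega
        · exact a4 i (by omega)
      · intro _
        change 2 * (c - f 0) ≤ 2 ^ (k + 1)
        omega

theorem exists_split (p Q : ℕ) (hp : 1 ≤ p) (hpQ : p ≤ Q) :
    ∃ k c : ℕ, 2 ^ k ∣ c ∧ p ≤ c ∧ c ≤ Q ∧ c < p + 2 ^ k ∧ Q < c + 2 ^ k := by
  classical
  let P : ℕ → Prop := fun k => ∃ c, 2 ^ k ∣ c ∧ p ≤ c ∧ c ≤ Q
  have hP0 : P 0 := ⟨p, by simp, le_rfl, hpQ⟩
  have hb : ∀ k, P k → k ≤ Q := by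
    rintro k ⟨c, h1, h2, h3⟩
    have := Nat.le_of_dvd (by omega) h1
    have := k.lt_two_pow_self
    omega
  have hg : P (Nat.findGreatest P Q) := Nat.findGreatest_spec (Nat.zero_le Q) hP0
  have hmax : ¬ P (Nat.findGreatest P Q + 1) := by
    intro h
    have := Nat.le_findGreatest (hb _ h) h
    omega
  generalize Nat.findGreatest P Q = k at hg hmax
  obtain ⟨c, ⟨i, rfl⟩, h2, h3⟩ := hg
  have hodd : i % 2 = 1 := by
    by_contra hne
    obtain ⟨j, rfl⟩ : ∃ j, i = 2 * j := ⟨i / 2, by omega⟩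
    exact hmax ⟨_, ⟨j, by ring⟩, h2, h3⟩
  obtain ⟨j, rfl⟩ : ∃ j, i = 2 * j + 1 := ⟨i / 2, by omega⟩
  refine ⟨k, _, ⟨_, rfl⟩, h2, h3, ?_, ?_⟩
  · by_contra hne
    have hk : 0 < 2 ^ k := by positivity
    refine hmax ⟨2 ^ (k + 1) * j, ⟨j, rfl⟩, ?_, ?_⟩
    · have : 2 ^ k * (2 * j + 1) = 2 ^ (k + 1) * j + 2 ^ k := by ring
      omega
    · have : 2 ^ k * (2 * j + 1) = 2 ^ (k + 1) * j + 2 ^ k := by ring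
      omega
  · by_contra hne
    have hk : 0 < 2 ^ k := by positivity
    have : 2 ^ k * (2 * j + 1) + 2 ^ k = 2 ^ (k + 1) * (j + 1) := by ring
    exact hmax ⟨2 ^ (k + 1) * (j + 1), ⟨_, rfl⟩, by omega, by omega⟩

theorem assemble (p q : ℕ) (m n : ℕ) (h : ℤ → ℕ)
    (h0 : h (-(m : ℤ)) = p) (h1 : h ((n : ℤ) + 1) = q + 1)
    (hs : ∀ j : ℤ, -(m : ℤ) ≤ j → j ≤ n → GCStep (h j) (h (j + 1))) :
    (∀ j : ℤ, -(m : ℤ) ≤ j → j ≤ n → IsGCInterval (Finset.Ico (h j) (h (j + 1)))) ∧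
      (∀ j₁ j₂ : ℤ, -(m : ℤ) ≤ j₁ → j₁ < j₂ → j₂ ≤ n →
        ∀ a ∈ Finset.Ico (h j₁) (h (j₁ + 1)), ∀ b ∈ Finset.Ico (h j₂) (h (j₂ + 1)), a < b) ∧
      ((Finset.Icc (-(m : ℤ)) (n : ℤ)).biUnion (fun j => Finset.Ico (h j) (h (j + 1)))
        = Finset.Icc p q) := by
  have mono : ∀ a b : ℤ, -(m : ℤ) ≤ a → a ≤ b → b ≤ n + 1 → h a ≤ h b := by
    intro a b ha hab
    induction b, hab using Int.leInduction with
    | base => intro _; exact le_rfl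
    | succ b hb ih =>
      intro hn
      exact (ih (by omega)).trans (hs b (by omega) (by omega)).1.le
  have cov : ∀ x b, -(m : ℤ) ≤ b → b ≤ n + 1 → p ≤ x → x < h b →
      ∃ j, -(m : ℤ) ≤ j ∧ j < b ∧ h j ≤ x ∧ x < h (j + 1) := by
    intro x b hb
    induction b, hb using Int.leInduction with
    | base => intro _ _ _; omega
    | succ b hb ih =>
      intro hn hx hxb
      by_cases hc : x < h b
      · obtain ⟨j, a1, a2, a3⟩ := ih (by omega) hx hc
        exact ⟨j, a1, by omega, a3⟩
      · exact ⟨b, hb, by omega, by omega, hxb⟩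
  refine ⟨fun j a b => (hs j a b).2, ?_, ?_⟩
  · intro j₁ j₂ a1 a2 a3 a ha b hb
    rw [Finset.mem_Ico] at ha hb
    have := mono (j₁ + 1) j₂ (by omega) (by omega) (by omega)
    omega
  · ext x
    simp only [Finset.mem_biUnion, Finset.mem_Icc, Finset.mem_Ico]
    constructor
    · rintro ⟨j, ⟨b1, b2⟩, b3, b4⟩
      have := mono (-(m : ℤ)) j le_rfl b1 (by omega)
      have := mono (j + 1) (n + 1) (by omega) (by omega) (by omega)
      omega
    · rintro ⟨b1, b2⟩
      obtain ⟨j, c1, c2, c3⟩ := cov x (n + 1) (by omega) le_rfl b1 (by omega)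
      exact ⟨j, ⟨c1, by omega⟩, c3⟩

/-- Lemma 1.2 of Daniely et al.: any interval `[p, q]` with `1 ≤ p ≤ q` can be partitioned
into pairwise disjoint consecutive GC intervals `I_{-m}, …, I_0, I_1, …, I_n` (listed in
increasing order, with union exactly `[p,q]`) such that `|I_{-i}| / |I_{-i+1}| ≤ 1/2` for
all `i ≥ 1` and `|I_i| / |I_{i-1}| ≤ 1/2` for all `i ≥ 2`. -/
theorem gc_intervals_partition (p q : ℕ) (hp : 1 ≤ p) (hpq : p ≤ q) :
    ∃ (m n : ℕ) (I : ℤ → Finset ℕ),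
      (∀ j : ℤ, -(m : ℤ) ≤ j → j ≤ n → IsGCInterval (I j)) ∧
      (∀ j₁ j₂ : ℤ, -(m : ℤ) ≤ j₁ → j₁ < j₂ → j₂ ≤ n →
        ∀ a ∈ I j₁, ∀ b ∈ I j₂, a < b) ∧
      ((Finset.Icc (-(m : ℤ)) (n : ℤ)).biUnion I = Finset.Icc p q) ∧
      (∀ i : ℕ, 1 ≤ i → (i : ℤ) ≤ m →
        2 * (I (-(i : ℤ))).card ≤ (I (-(i : ℤ) + 1)).card) ∧
      (∀ i : ℕ, 2 ≤ i → (i : ℤ) ≤ n →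
        2 * (I (i : ℤ)).card ≤ (I ((i : ℤ) - 1)).card) := by
  obtain ⟨k, c, hd, hpc, hcQ, hl, hr⟩ := exists_split p (q + 1) hp (by omega)
  obtain ⟨n, f, f0, fn, fs, fr, -⟩ := right_part k c (q + 1) (by omega) hd hcQ hr
  obtain ⟨m, g, g0, gm, gs, gr, -⟩ := left_part k c p hp hd hpc hl
  rcases m with _ | m
  · rcases n with _ | n
    · omega
    · obtain ⟨A1, A2, A3⟩ := assemble p q 0 n (fun j => f j.toNat)
        (by simp; omega) (by simpa using fn)
        (by
          intro j h1 h2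
          have := fs j.toNat (by omega)
          have e : (j + 1).toNat = j.toNat + 1 := by omega
          simpa only [e] using this)
      refine ⟨0, n, _, A1, A2, A3, ?_, ?_⟩
      · intro i h1 h2
        omega
      · intro i h1 h2
        obtain ⟨i, rfl⟩ : ∃ i', i = i' + 1 := ⟨i - 1, by omega⟩
        have := fr i (by omega)
        have e1 : (((i + 1 : ℕ) : ℤ)).toNat = i + 1 := by omega
        have e2 : (((i + 1 : ℕ) : ℤ) + 1).toNat = i + 2 := by omega
        have e3 : (((i + 1 : ℕ) : ℤ) - 1).toNat = i := by omega
        have e4 : (((i + 1 : ℕ) : ℤ) - 1 + 1).toNat = i + 1 := by omega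
        simpa only [Nat.card_Ico, e1, e2, e3, e4] using this
  · obtain ⟨h, hg, hf⟩ : ∃ h : ℤ → ℕ, (∀ i : ℕ, h (1 - i) = g i) ∧ (∀ i : ℕ, h (1 + i) = f i) := by
      refine ⟨fun j => if j ≤ 1 then g (1 - j).toNat else f (j - 1).toNat, ?_, ?_⟩
      · intro i
        have e : (1 - (1 - (i : ℤ))).toNat = i := by omega
        simp only [e]
        rw [if_pos (by omega)]
      · rintro (_ | i)
        · simp [f0, g0]
        · have e : (1 + ((i + 1 : ℕ) : ℤ) - 1).toNat = i + 1 := by omega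
          simp only [e]
          rw [if_neg (by omega)]
    obtain ⟨A1, A2, A3⟩ := assemble p q m n h
        (by rw [← gm, ← hg]; congr 1; push_cast; ring)
        (by rw [← fn, ← hf]; congr 1; ring)
        (by
          intro j h1 h2
          by_cases hj : j ≤ 0
          · obtain ⟨i, rfl⟩ : ∃ i : ℕ, j = -(i : ℤ) := ⟨(-j).toNat, by omega⟩
            have := gs i (by omega)
            rw [← hg, ← hg] at this
            convert this using 2 <;> push_cast <;> ring
          · obtain ⟨i, rfl⟩ : ∃ i : ℕ, j = 1 + (i : ℤ) := ⟨(j - 1).toNat, by omega⟩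
            have := fs i (by omega)
            rw [← hf, ← hf] at this
            convert this using 2 <;> push_cast <;> ring)
    refine ⟨m, n, _, A1, A2, A3, ?_, ?_⟩
    · intro i h1 h2
      obtain ⟨i, rfl⟩ : ∃ i', i = i' + 1 := ⟨i - 1, by omega⟩
      have := gr i (by omega)
      rw [← hg, ← hg, ← hg] at this
      have e1 : -((i + 1 : ℕ) : ℤ) = 1 - ((i + 2 : ℕ) : ℤ) := by push_cast; ring
      have e2 : 1 - ((i + 2 : ℕ) : ℤ) + 1 = 1 - ((i + 1 : ℕ) : ℤ) := by push_cast; ring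
      have e3 : 1 - ((i + 1 : ℕ) : ℤ) + 1 = 1 - (i : ℤ) := by push_cast; ring
      simp only [Nat.card_Ico]
      rw [e1, e2, e3]
      exact this
    · intro i h1 h2
      obtain ⟨i, rfl⟩ : ∃ i', i = i' + 2 := ⟨i - 2, by omega⟩
      have := fr i (by omega)
      rw [← hf, ← hf, ← hf] at this
      have e1 : ((i + 2 : ℕ) : ℤ) + 1 = 1 + ((i + 2 : ℕ) : ℤ) := by ring
      have e2 : ((i + 2 : ℕ) : ℤ) - 1 + 1 = 1 + ((i + 1 : ℕ) : ℤ) := by push_cast; ring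
      have e3 : ((i + 2 : ℕ) : ℤ) - 1 = 1 + (i : ℤ) := by push_cast; ring
      have e4 : ((i + 2 : ℕ) : ℤ) = 1 + ((i + 1 : ℕ) : ℤ) := by push_cast; ring
      simp only [Nat.card_Ico]
      rw [← e4] at this
      rw [e1, e2, e3, ← e4]
      exact this
end

section
/- Let a_0 > 0 and a_1, …, a_m ∈ [0, 1] be real numbers, and let f : (0, +∞) → [0, +∞) be a non-increasing function. Then Σ_{i=1}^{m} a_i · f(a_0 + a_1 + ⋯ + a_{i−1}) ≤ f(a_0) + ∫_{a_0}^{a_0 + a_1 + ⋯ + a_m} f(u) du. -/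
open Finset

/-- Lemma 14 of Gaillard et al.: for `a_0 > 0`, `a_1, …, a_m ∈ [0,1]` and a non-increasing
nonnegative function `f` on `(0, ∞)`,
`Σ_{i=1}^m a_i · f(a_0 + ⋯ + a_{i−1}) ≤ f(a_0) + ∫_{a_0}^{a_0 + ⋯ + a_m} f(u) du`. -/
theorem sum_le_f_add_integral (m : ℕ) (a : ℕ → ℝ) (ha0 : 0 < a 0)
    (ha : ∀ i, 1 ≤ i → i ≤ m → a i ∈ Set.Icc (0 : ℝ) 1)
    (f : ℝ → ℝ) (hf_nonneg : ∀ x, 0 < x → 0 ≤ f x)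
    (hf_anti : AntitoneOn f (Set.Ioi 0)) :
    ∑ i ∈ Icc 1 m, a i * f (∑ j ∈ range i, a j)
      ≤ f (a 0) + ∫ u in (a 0)..(∑ j ∈ range (m + 1), a j), f u := by
  have hint : ∀ x y, 0 < x → x ≤ y → IntervalIntegrable f MeasureTheory.volume x y := by
    intro x y hx hxy
    apply AntitoneOn.intervalIntegrable
    apply hf_anti.mono
    rw [Set.uIcc_of_le hxy]
    intro z hz
    exact lt_of_lt_of_le hx hz.1
  have key : ∀ n, n ≤ m → a 0 ≤ ∑ j ∈ range (n + 1), a j ∧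
      ∑ i ∈ Icc 1 n, a i * f (∑ j ∈ range i, a j) + f (∑ j ∈ range (n + 1), a j)
        ≤ f (a 0) + ∫ u in (a 0)..(∑ j ∈ range (n + 1), a j), f u := by
    intro n
    induction n with
    | zero => intro _; simp
    | succ n ih =>
      intro hn
      obtain ⟨h1, h2⟩ := ih (by omega)
      obtain ⟨b0, b1⟩ := ha (n + 1) (by omega) hn
      rw [Finset.sum_Icc_succ_top (by omega), Finset.sum_range_succ _ (n + 1)]
      generalize (∑ j ∈ range (n + 1), a j) = s at *
      generalize a (n + 1) = b at *
      have hs : 0 < s := lt_of_lt_of_le ha0 h1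
      have hsb : s ≤ s + b := by linarith
      refine ⟨by linarith, ?_⟩
      have hadd := intervalIntegral.integral_add_adjacent_intervals
        (hint _ _ ha0 h1) (hint _ _ hs hsb)
      have hlow : b * f (s + b) ≤ ∫ u in s..(s + b), f u := by
        have h := intervalIntegral.integral_mono_on (f := fun _ => f (s + b)) (g := f) hsb
          intervalIntegrable_const (hint _ _ hs hsb) (fun x hx =>
            hf_anti (Set.mem_Ioi.2 (lt_of_lt_of_le hs hx.1))
              (Set.mem_Ioi.2 (lt_of_lt_of_le hs hsb)) hx.2)
        simpa using h
      have hfa : f (s + b) ≤ f s :=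
        hf_anti (Set.mem_Ioi.2 hs) (Set.mem_Ioi.2 (lt_of_lt_of_le hs hsb)) hsb
      have := mul_nonneg (sub_nonneg.2 b1) (sub_nonneg.2 hfa)
      nlinarith
  obtain ⟨h1, h2⟩ := key m le_rfl
  have := hf_nonneg _ (lt_of_lt_of_le ha0 h1)
  linarith
end

section
/- Let a_1, …, a_m ∈ [0, 1] be real numbers. Then Σ_{t=1}^{m} a_t / √(1 + a_1 + ⋯ + a_{t−1}) ≤ 2·√(1 + a_1 + ⋯ + a_m) − 1. -/
open Finset

theorem aux_step (s x : ℝ) (hs : 1 ≤ s) (h0 : 0 ≤ x) (h1 : x ≤ 1) :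
    x / Real.sqrt s ≤ 2 * Real.sqrt (s + x) - 1 / Real.sqrt (s + x)
      - (2 * Real.sqrt s - 1 / Real.sqrt s) := by
  have hu : 0 < Real.sqrt s := Real.sqrt_pos.mpr (by linarith)
  have hv : 0 < Real.sqrt (s + x) := Real.sqrt_pos.mpr (by linarith)
  have huv : Real.sqrt s ≤ Real.sqrt (s + x) := Real.sqrt_le_sqrt (by linarith)
  have hu2 : Real.sqrt s ^ 2 = s := Real.sq_sqrt (by linarith)
  have hv2 : Real.sqrt (s + x) ^ 2 = s + x := Real.sq_sqrt (by linarith)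
  generalize Real.sqrt s = u at *
  generalize Real.sqrt (s + x) = v at *
  have hx : x = v ^ 2 - u ^ 2 := by linarith
  have key : 0 ≤ (v - u) * (1 - v * (v - u)) := by
    apply mul_nonneg (by linarith)
    nlinarith [mul_nonneg hu.le (sub_nonneg.mpr huv)]
  have e : 2 * v - 1 / v - (2 * u - 1 / u) - x / u
      = ((v - u) * (1 - v * (v - u))) / (u * v) := by
    rw [hx]
    field_simp
    ring
  have : 0 ≤ ((v - u) * (1 - v * (v - u))) / (u * v) := by positivity
  linarith

theorem aux_strong (m : ℕ) (a : ℕ → ℝ)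
    (ha : ∀ t, 1 ≤ t → t ≤ m → a t ∈ Set.Icc (0 : ℝ) 1) :
    ∑ t ∈ Icc 1 m, a t / Real.sqrt (1 + ∑ j ∈ Ico 1 t, a j)
      ≤ 2 * Real.sqrt (1 + ∑ j ∈ Icc 1 m, a j) - 1
        - 1 / Real.sqrt (1 + ∑ j ∈ Icc 1 m, a j) := by
  induction m with
  | zero => norm_num
  | succ n ih =>
    have ih' := ih (fun t h1 h2 => ha t h1 (by omega))
    rw [Finset.sum_Icc_succ_top (by omega), Finset.sum_Icc_succ_top (by omega)]
    have hI : Ico 1 (n + 1) = Icc 1 n := by ext x; simp only [Finset.mem_Ico, Finset.mem_Icc]; omega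
    rw [hI, ← add_assoc]
    have hs : 0 ≤ ∑ j ∈ Icc 1 n, a j := Finset.sum_nonneg (fun t ht => by
      rw [Finset.mem_Icc] at ht
      exact (ha t ht.1 (by omega)).1)
    have h := ha (n + 1) (by omega) le_rfl
    have := aux_step (1 + ∑ j ∈ Icc 1 n, a j) (a (n + 1)) (by linarith) h.1 h.2
    linarith

/-- For `a_1, …, a_m ∈ [0,1]`,
`Σ_{t=1}^m a_t / √(1 + a_1 + ⋯ + a_{t−1}) ≤ 2·√(1 + a_1 + ⋯ + a_m) − 1`. -/
theorem sum_div_sqrt_partial_sums (m : ℕ) (a : ℕ → ℝ)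
    (ha : ∀ t, 1 ≤ t → t ≤ m → a t ∈ Set.Icc (0 : ℝ) 1) :
    ∑ t ∈ Icc 1 m, a t / Real.sqrt (1 + ∑ j ∈ Ico 1 t, a j)
      ≤ 2 * Real.sqrt (1 + ∑ j ∈ Icc 1 m, a j) - 1 := by
  have h := aux_strong m a ha
  have : 0 ≤ 1 / Real.sqrt (1 + ∑ j ∈ Icc 1 m, a j) := by positivity
  linarith
end

section
/- Let a_1, …, a_m ∈ [0, 1] be real numbers. Then Σ_{t=1}^{m} a_t / (1 + a_1 + ⋯ + a_{t−1}) ≤ 1 + ln(1 + a_1 + ⋯ + a_m). -/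
open Finset

theorem sum_div_aux (m : ℕ) (a : ℕ → ℝ)
    (ha : ∀ t, 1 ≤ t → t ≤ m → a t ∈ Set.Icc (0 : ℝ) 1) :
    1 ≤ 1 + ∑ j ∈ Icc 1 m, a j ∧
    ∑ t ∈ Icc 1 m, a t / (1 + ∑ j ∈ Ico 1 t, a j)
      ≤ 1 - 1 / (1 + ∑ j ∈ Icc 1 m, a j) + Real.log (1 + ∑ j ∈ Icc 1 m, a j) := by
  induction m with
  | zero => simp
  | succ n ih =>
    obtain ⟨h1, h2⟩ := ih (fun t h h' => ha t h (by omega))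
    obtain ⟨h3, h4⟩ := ha (n + 1) (by omega) le_rfl
    have e : Ico 1 (n + 1) = Icc 1 n := by ext x; simp only [mem_Ico, mem_Icc]; omega
    rw [Finset.sum_Icc_succ_top (by omega), Finset.sum_Icc_succ_top (by omega), e, ← add_assoc]
    generalize 1 + ∑ j ∈ Icc 1 n, a j = S at *
    generalize a (n + 1) = x at *
    refine ⟨by linarith, ?_⟩
    have hS : 0 < S := by linarith
    have hS' : 0 < S + x := by linarith
    have hl := Real.one_sub_inv_le_log_of_pos (div_pos hS' hS)
    rw [Real.log_div hS'.ne' hS.ne', inv_div] at hl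
    have key : x / S ≤ 1 - S / (S + x) + 1 / S - 1 / (S + x) := by
      have : 1 - S / (S + x) + 1 / S - 1 / (S + x) - x / S = x * (1 - x) / (S * (S + x)) := by
        field_simp
        ring
      have h : 0 ≤ x * (1 - x) / (S * (S + x)) :=
        div_nonneg (mul_nonneg h3 (by linarith)) (by positivity)
      linarith
    linarith

/-- For `a_1, …, a_m ∈ [0,1]`,
`Σ_{t=1}^m a_t / (1 + a_1 + ⋯ + a_{t−1}) ≤ 1 + ln(1 + a_1 + ⋯ + a_m)`. -/
theorem sum_div_partial_sums (m : ℕ) (a : ℕ → ℝ)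
    (ha : ∀ t, 1 ≤ t → t ≤ m → a t ∈ Set.Icc (0 : ℝ) 1) :
    ∑ t ∈ Icc 1 m, a t / (1 + ∑ j ∈ Ico 1 t, a j)
      ≤ 1 + Real.log (1 + ∑ j ∈ Icc 1 m, a j) := by
  obtain ⟨h1, h2⟩ := sum_div_aux m a ha
  have : 0 ≤ 1 / (1 + ∑ j ∈ Icc 1 m, a j) := by
    apply div_nonneg <;> linarith
  linarith
end
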